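/- Assume π, every entry of p, and all the emission weights f_0, f_1,…,f_T are strictly positive. Then for every t ∈ {1,…,T} and j ∈ S, the smoothed pairwise regime probabilities P(r_{t−1} = i and r_t = j) satisfy: (a) if i ∈ S_AR, then P(r_{t−1} = i and r_t = j) = P(n_{t,i}(r) = 1 and r_t = j) = Σ_{n ∈ S^(t) : n_i = 1} γ^(t)_n(j); (b) if i ∈ S_AR^c, then P(r_{t−1} = i and r_t = j) = Σ_{n : n − 1 ∈ S^(t−1)} γ^(t)_n(j) · p_{ij} · α̂^(t−1)_{n−1}(i) / (Σ_{ℓ ∈ S_AR^c} p_{ℓj} · α̂^(t−1)_{n−1}(ℓ)). -/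

import Mathlib

open Finset

namespace MRS

/-- Time since the last visit to the regime with value `j` strictly before time `t`;
equals `t + 1` if that regime was never visited before time `t`. -/
def counter {M : ℕ} (r : ℕ → Fin M) (t : ℕ) (j : ℕ) : ℕ :=
  if h : ((Finset.range t).filter fun τ => (r τ : ℕ) = j).Nonempty then
    t - ((Finset.range t).filter fun τ => (r τ : ℕ) = j).max' h
  else t + 1

/-- Counter vector for the `k` AR(1) regimes (the regimes with values `0, …, k-1`). -/
def nvec {M : ℕ} (k : ℕ) (r : ℕ → Fin M) (t : ℕ) : Fin k → ℕ :=
  fun j => counter r t (j : ℕ)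

/-- Extend a finite path to a stream (values beyond the end repeat the last value;
they are never used for counters up to time `t`). -/
def pad {M t : ℕ} (r : Fin (t + 1) → Fin M) : ℕ → Fin M :=
  fun s => r ⟨min s t, Nat.lt_succ_of_le (min_le_right s t)⟩

/-- The set `S^(t)` of possible counter vectors at time `t`: every entry lies in
`{1, …, t+1}`, at most `min t k` entries differ from `t+1`, and the entries different
from `t+1` are pairwise distinct. -/
def Sset (k t : ℕ) : Finset (Fin k → ℕ) :=
  (Fintype.piFinset fun _ : Fin k => Finset.Icc 1 (t + 1)).filter fun n =>
    (Finset.univ.filter fun j => n j ≠ t + 1).card ≤ min t k ∧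
      ∀ i j : Fin k, i ≠ j → n i ≠ t + 1 → n j ≠ t + 1 → n i ≠ n j

/-- Weight of a (partial) path `r = (r_0, …, r_t)`:
`π_{r_0} f_0(r_0) ∏_{s=1}^t p_{r_{s-1} r_s} f_s(r_s, n_s(r))`. -/
noncomputable def wpath {M : ℕ} (k : ℕ) (pi0 : Fin M → ℝ) (p : Fin M → Fin M → ℝ)
    (f0 : Fin M → ℝ) (f : ℕ → Fin M → (Fin k → ℕ) → ℝ) {t : ℕ}
    (r : Fin (t + 1) → Fin M) : ℝ :=
  pi0 (r 0) * f0 (r 0) *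
    ∏ s ∈ Finset.Icc 1 t, p (pad r (s - 1)) (pad r s) * f s (pad r s) (nvec k (pad r) s)

/-- Forward quantity `α^(t)_n(j)`: total weight of partial paths ending in regime `j`
at time `t` with counter vector `n`. -/
noncomputable def alpha {M : ℕ} (k : ℕ) (pi0 : Fin M → ℝ) (p : Fin M → Fin M → ℝ)
    (f0 : Fin M → ℝ) (f : ℕ → Fin M → (Fin k → ℕ) → ℝ)
    (t : ℕ) (n : Fin k → ℕ) (j : Fin M) : ℝ :=
  ∑ r ∈ Finset.univ.filter
      (fun r : Fin (t + 1) → Fin M => r (Fin.last t) = j ∧ nvec k (pad r) t = n),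
    wpath k pi0 p f0 f r

end MRS

namespace MRS

/-- Total forward mass at time `t`. -/
noncomputable def Asum {M : ℕ} (k : ℕ) (pi0 : Fin M → ℝ) (p : Fin M → Fin M → ℝ)
    (f0 : Fin M → ℝ) (f : ℕ → Fin M → (Fin k → ℕ) → ℝ) (t : ℕ) : ℝ :=
  ∑ n ∈ Sset k t, ∑ i : Fin M, alpha k pi0 p f0 f t n i

/-- Filtered probability `α̂^(t)_n(j) = α^(t)_n(j) / (∑_{ℓ} ∑_{n'} α^(t)_{n'}(ℓ))`. -/
noncomputable def alphaHat {M : ℕ} (k : ℕ) (pi0 : Fin M → ℝ) (p : Fin M → Fin M → ℝ)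
    (f0 : Fin M → ℝ) (f : ℕ → Fin M → (Fin k → ℕ) → ℝ)
    (t : ℕ) (n : Fin k → ℕ) (j : Fin M) : ℝ :=
  alpha k pi0 p f0 f t n j / Asum k pi0 p f0 f t

/-- The smoothing path measure: `P(E) = (∑_{r ∈ E} w(r)) / (∑_r w(r))`. -/
noncomputable def Ppath {M : ℕ} (k : ℕ) (pi0 : Fin M → ℝ) (p : Fin M → Fin M → ℝ)
    (f0 : Fin M → ℝ) (f : ℕ → Fin M → (Fin k → ℕ) → ℝ) (T : ℕ)
    (E : Finset (Fin (T + 1) → Fin M)) : ℝ :=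
  (∑ r ∈ E, wpath k pi0 p f0 f r) / ∑ r : Fin (T + 1) → Fin M, wpath k pi0 p f0 f r

/-- Smoothed probability `γ^(t)_n(i) = P(r_t = i, n_t(r) = n)`. -/
noncomputable def gamma {M : ℕ} (k : ℕ) (pi0 : Fin M → ℝ) (p : Fin M → Fin M → ℝ)
    (f0 : Fin M → ℝ) (f : ℕ → Fin M → (Fin k → ℕ) → ℝ) (T : ℕ)
    (t : ℕ) (n : Fin k → ℕ) (i : Fin M) : ℝ :=
  Ppath k pi0 p f0 f T
    (Finset.univ.filter fun r : Fin (T + 1) → Fin M =>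
      pad r t = i ∧ nvec k (pad r) t = n)

end MRS

namespace MRS

lemma counter_zero {M : ℕ} (x : ℕ → Fin M) (j : ℕ) : counter x 0 j = 1 := by
  simp [counter]

lemma counter_succ {M : ℕ} (x : ℕ → Fin M) (t j : ℕ) :
    counter x (t + 1) j = if (x t : ℕ) = j then 1 else counter x t j + 1 := by
  by_cases hx : (x t : ℕ) = j
  · have hne : ((Finset.range (t + 1)).filter fun τ => (x τ : ℕ) = j).Nonempty :=
      ⟨t, by simp [hx]⟩
    have hmax : ((Finset.range (t + 1)).filter fun τ => (x τ : ℕ) = j).max' hne = t := by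
      apply le_antisymm
      · apply Finset.max'_le
        intro y hy
        simp only [Finset.mem_filter, Finset.mem_range] at hy
        omega
      · apply Finset.le_max'
        simp [hx]
    rw [counter, dif_pos hne, hmax, if_pos hx]
    omega
  · have he : ((Finset.range (t + 1)).filter fun τ => (x τ : ℕ) = j)
        = ((Finset.range t).filter fun τ => (x τ : ℕ) = j) := by
      rw [Finset.range_add_one, Finset.filter_insert, if_neg hx]
    rw [if_neg hx]
    unfold counter
    simp only [he]
    split_ifs with h
    · have hm := Finset.max'_mem _ h
      simp only [Finset.mem_filter, Finset.mem_range] at hm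
      omega
    · rfl

lemma counter_congr {M : ℕ} {x y : ℕ → Fin M} {t : ℕ} (j : ℕ)
    (h : ∀ u < t, x u = y u) : counter x t j = counter y t j := by
  induction t with
  | zero => simp [counter_zero]
  | succ t ih =>
    rw [counter_succ, counter_succ, h t (by omega), ih fun u hu => h u (by omega)]

lemma nvec_congr {M k : ℕ} {x y : ℕ → Fin M} {t : ℕ}
    (h : ∀ u < t, x u = y u) : nvec k x t = nvec k y t :=
  funext fun _ => counter_congr _ h

lemma counter_spec {M : ℕ} (x : ℕ → Fin M) (t j : ℕ) :
    1 ≤ counter x t j ∧ counter x t j ≤ t + 1 ∧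
      (counter x t j ≠ t + 1 → (x (t - counter x t j) : ℕ) = j) := by
  induction t with
  | zero => simp [counter_zero]
  | succ t ih =>
    rw [counter_succ]
    split_ifs with h
    · exact ⟨by omega, by omega, fun _ => by simpa using h⟩
    · refine ⟨by omega, by omega, fun hne => ?_⟩
      have := ih.2.2 (by omega)
      rwa [Nat.add_sub_add_right]

lemma nvec_mem {M k : ℕ} (x : ℕ → Fin M) (t : ℕ) : nvec k x t ∈ Sset k t := by
  have hinj : ∀ i j : Fin k, i ≠ j → nvec k x t i ≠ t + 1 → nvec k x t j ≠ t + 1 →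
      nvec k x t i ≠ nvec k x t j := by
    intro i j hij hi hj he
    apply hij
    have h1 := (counter_spec x t i).2.2 hi
    have h2 := (counter_spec x t j).2.2 hj
    unfold nvec at he
    rw [he] at h1
    exact Fin.ext (h1.symm.trans h2)
  simp only [Sset, Finset.mem_filter, Fintype.mem_piFinset, Finset.mem_Icc]
  refine ⟨fun i => ⟨(counter_spec x t i).1, (counter_spec x t i).2.1⟩, le_min ?_ ?_, hinj⟩
  · have := Finset.card_le_card_of_injOn (s := Finset.univ.filter fun j => nvec k x t j ≠ t + 1)
      (t := Finset.Icc 1 t) (nvec k x t) ?_ ?_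
    · simpa using this
    · intro i hi
      simp only [Finset.coe_filter, Finset.mem_univ, true_and, Set.mem_setOf_eq] at hi
      have h1 := (counter_spec x t i).1
      have h2 := (counter_spec x t i).2.1
      simp only [Finset.coe_Icc, Set.mem_Icc]
      unfold nvec at *
      omega
    · intro i hi j hj he
      simp only [Finset.coe_filter, Finset.mem_univ, true_and, Set.mem_setOf_eq] at hi hj
      by_contra hne
      exact hinj i j hne hi hj he
  · exact (Finset.card_le_univ _).trans (by simp)

/-- one-step update of the counters -/
def upd {M k : ℕ} (n : Fin k → ℕ) (i : Fin M) : Fin k → ℕ :=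
  fun l => if (i : ℕ) = l then 1 else n l + 1

lemma nvec_succ {M k : ℕ} (x : ℕ → Fin M) (t : ℕ) :
    nvec k x (t + 1) = upd (nvec k x t) (x t) :=
  funext fun _ => counter_succ _ _ _

lemma upd_of_le {M k : ℕ} (n : Fin k → ℕ) (i : Fin M) (h : k ≤ (i : ℕ)) :
    upd n i = fun l => n l + 1 := by
  funext l
  have := l.2
  exact if_neg (by omega)

lemma pad_snoc_le {M s : ℕ} (a : Fin (s + 1) → Fin M) (l : Fin M) {u : ℕ} (hu : u ≤ s) :
    pad (Fin.snoc (α := fun _ => Fin M) a l : Fin (s + 2) → Fin M) u = pad a u := by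
  have h1 : min u (s + 1) = u := by omega
  have h2 : min u s = u := by omega
  simp only [pad, Fin.snoc, h1, h2]
  rw [dif_pos (by omega)]
  rfl

lemma pad_snoc_last {M s : ℕ} (a : Fin (s + 1) → Fin M) (l : Fin M) :
    pad (Fin.snoc (α := fun _ => Fin M) a l : Fin (s + 2) → Fin M) (s + 1) = l := by
  simp [pad, Fin.snoc]

lemma pad_last {M s : ℕ} (a : Fin (s + 1) → Fin M) : pad a s = a (Fin.last s) := by
  simp [pad, Fin.last]

lemma pad_zero {M s : ℕ} (a : Fin (s + 1) → Fin M) : pad a 0 = a 0 := by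
  simp [pad]

lemma sum_snoc {M s : ℕ} (F : (Fin (s + 2) → Fin M) → ℝ) :
    ∑ a, F a = ∑ a : Fin (s + 1) → Fin M, ∑ l : Fin M,
      F (Fin.snoc (α := fun _ => Fin M) a l) := by
  rw [← (Fin.snocEquiv (fun _ : Fin (s + 2) => Fin M)).sum_comp, Fintype.sum_prod_type,
    Finset.sum_comm]
  rfl

section
variable {M k : ℕ} (pi0 : Fin M → ℝ) (p : Fin M → Fin M → ℝ)
    (f0 : Fin M → ℝ) (f : ℕ → Fin M → (Fin k → ℕ) → ℝ)

lemma wpath_snoc {s : ℕ} (a : Fin (s + 1) → Fin M) (l : Fin M) :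
    wpath k pi0 p f0 f (Fin.snoc (α := fun _ => Fin M) a l : Fin (s + 2) → Fin M)
      = wpath k pi0 p f0 f a *
        (p (pad a s) l * f (s + 1) l (upd (nvec k (pad a) s) (pad a s))) := by
  unfold wpath
  rw [← pad_zero (Fin.snoc (α := fun _ => Fin M) a l : Fin (s + 2) → Fin M), ← pad_zero a, pad_snoc_le _ _ (Nat.zero_le s),
    Finset.prod_Icc_succ_top (by omega), pad_snoc_last, Nat.add_sub_cancel,
    pad_snoc_le _ _ le_rfl, nvec_succ, pad_snoc_le _ _ le_rfl,
    nvec_congr (y := pad a) fun u hu => pad_snoc_le a l hu.le, ← mul_assoc]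
  congr 2
  apply Finset.prod_congr rfl
  intro u hu
  rw [Finset.mem_Icc] at hu
  rw [pad_snoc_le a l (show u - 1 ≤ s by omega), pad_snoc_le a l hu.2,
    nvec_congr (y := pad a) fun v hv => pad_snoc_le a l (show v ≤ s by omega)]

/-- backward quantities -/
noncomputable def bwd : ℕ → ℕ → (Fin k → ℕ) → Fin M → ℝ
  | 0, _, _, _ => 1
  | m + 1, s, n, j => ∑ l, p j l * f (s + 1) l (upd n j) * bwd m (s + 1) (upd n j) l

lemma key (T : ℕ) : ∀ (m s : ℕ), s + m = T → ∀ φ : (ℕ → Fin M) → ℝ,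
    (∀ x y, (∀ u ≤ s, x u = y u) → φ x = φ y) →
    ∑ r : Fin (T + 1) → Fin M, wpath k pi0 p f0 f r * φ (pad r)
      = ∑ a : Fin (s + 1) → Fin M, wpath k pi0 p f0 f a * φ (pad a) *
          bwd p f m s (nvec k (pad a) s) (pad a s) := by
  intro m
  induction m with
  | zero =>
    intro s h φ _
    obtain rfl : s = T := h
    simp [bwd]
  | succ m ih =>
    intro s h φ hφ
    rw [ih (s + 1) (by omega) φ fun x y hxy => hφ x y fun u hu => hxy u (by omega), sum_snoc]
    apply Finset.sum_congr rfl
    intro a _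
    rw [bwd, Finset.mul_sum]
    apply Finset.sum_congr rfl
    intro l _
    rw [wpath_snoc, nvec_succ, pad_snoc_last, pad_snoc_le _ _ le_rfl,
      nvec_congr (y := pad a) fun u hu => pad_snoc_le a l hu.le,
      hφ _ (pad a) fun u hu => pad_snoc_le a l hu]
    ring

lemma pairsum (T s : ℕ) (h : s + 1 ≤ T) (n : Fin k → ℕ) (i j : Fin M) (hi : k ≤ (i : ℕ)) :
    ∑ r ∈ Finset.univ.filter (fun r : Fin (T + 1) → Fin M =>
        (pad r s = i ∧ pad r (s + 1) = j) ∧ nvec k (pad r) s = n), wpath k pi0 p f0 f r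
      = alpha k pi0 p f0 f s n i * p i j *
        (f (s + 1) j (fun l => n l + 1) * bwd p f (T - (s + 1)) (s + 1) (fun l => n l + 1) j) := by
  classical
  have := key pi0 p f0 f T (T - (s + 1)) (s + 1) (by omega)
    (fun x => if (x s = i ∧ x (s + 1) = j) ∧ nvec k x s = n then 1 else 0) (by
      intro x y hxy
      simp only [hxy s (by omega), hxy (s + 1) le_rfl,
        nvec_congr (k := k) (x := x) (y := y) (t := s) fun u hu => hxy u (by omega)])
  simp only [mul_ite, mul_one, mul_zero] at this
  rw [Finset.sum_filter, this, sum_snoc, alpha, Finset.sum_mul, Finset.sum_mul, Finset.sum_filter]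
  apply Finset.sum_congr rfl
  intro a _
  simp only [wpath_snoc, nvec_succ, pad_snoc_last, pad_snoc_le _ _ (le_refl s),
      fun l => nvec_congr (k := k) (t := s)
        (x := pad (Fin.snoc (α := fun _ => Fin M) a l : Fin (s + 2) → Fin M)) (y := pad a)
        fun u hu => pad_snoc_le a l hu.le]
  rw [← pad_last a]
  by_cases hc : pad a s = i ∧ nvec k (pad a) s = n
  · obtain ⟨h1, h2⟩ := hc
    simp only [h1, h2, true_and, and_true, and_self, if_true, upd_of_le _ _ hi, ite_mul, zero_mul,
      Finset.sum_ite_eq', Finset.mem_univ]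
    ring
  · rw [if_neg hc]
    apply Finset.sum_eq_zero
    intro l _
    rw [if_neg (by tauto), zero_mul]

lemma wpath_pos {s T : ℕ} (hs : s ≤ T) (hpi : ∀ i, 0 < pi0 i)
    (hp : ∀ i j, 0 < p i j) (hf0 : ∀ i, 0 < f0 i)
    (hf : ∀ t, 1 ≤ t → t ≤ T → ∀ (j : Fin M) n, 0 < f t j n) (a : Fin (s + 1) → Fin M) :
    0 < wpath k pi0 p f0 f a := by
  refine mul_pos (mul_pos (hpi _) (hf0 _)) (Finset.prod_pos fun u hu => ?_)
  rw [Finset.mem_Icc] at hu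
  exact mul_pos (hp _ _) (hf _ hu.1 (by omega) _ _)

lemma nvec_succ_eq_iff (x : ℕ → Fin M) (s : ℕ) (n : Fin k → ℕ) (hn : ∀ l, 1 ≤ n l) :
    nvec k x (s + 1) = (fun l => n l + 1) ↔ k ≤ (x s : ℕ) ∧ nvec k x s = n := by
  rw [nvec_succ]
  constructor
  · intro h
    have hk : k ≤ (x s : ℕ) := by
      by_contra hlt
      have := congrFun h ⟨x s, by omega⟩
      have h1 := hn ⟨x s, by omega⟩
      simp [upd] at this
      omega
    refine ⟨hk, ?_⟩
    rw [upd_of_le _ _ hk] at h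
    funext l
    simpa using congrFun h l
  · rintro ⟨h1, h2⟩
    rw [upd_of_le _ _ h1, h2]

lemma nvec_succ_eq_one_iff (x : ℕ → Fin M) (s : ℕ) (hkM : k ≤ M) (i : Fin k) :
    nvec k x (s + 1) i = 1 ↔ x s = Fin.castLE hkM i := by
  rw [nvec_succ, upd, Fin.ext_iff]
  have : 1 ≤ nvec k x s i := (counter_spec x s i).1
  simp only [Fin.val_castLE]
  split_ifs with h <;> simp [h]
  omega

lemma gamma_sum (T s : ℕ) (h : s + 1 ≤ T) (n : Fin k → ℕ) (j : Fin M) (hn : ∀ l, 1 ≤ n l) :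
    ∑ r ∈ Finset.univ.filter (fun r : Fin (T + 1) → Fin M =>
        pad r (s + 1) = j ∧ nvec k (pad r) (s + 1) = fun l => n l + 1), wpath k pi0 p f0 f r
      = (∑ ℓ ∈ Finset.univ.filter (fun ℓ : Fin M => k ≤ (ℓ : ℕ)),
          p ℓ j * alpha k pi0 p f0 f s n ℓ) *
        (f (s + 1) j (fun l => n l + 1) * bwd p f (T - (s + 1)) (s + 1) (fun l => n l + 1) j) := by
  rw [Finset.sum_mul]
  rw [← Finset.sum_fiberwise_of_maps_to (t := Finset.univ.filter (fun ℓ : Fin M => k ≤ (ℓ : ℕ)))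
    (g := fun r => pad r s)]
  · apply Finset.sum_congr rfl
    intro ℓ hℓ
    rw [Finset.mem_filter] at hℓ
    rw [mul_comm (p ℓ j), ← pairsum pi0 p f0 f T s h n ℓ j hℓ.2, Finset.filter_filter]
    apply Finset.sum_congr _ fun _ _ => rfl
    ext r
    simp only [Finset.mem_filter, Finset.mem_univ, true_and, nvec_succ_eq_iff _ _ _ hn]
    constructor
    · rintro ⟨⟨h1, h2, h3⟩, h4⟩
      exact ⟨⟨h4, h1⟩, h3⟩
    · rintro ⟨⟨h4, h1⟩, h3⟩
      exact ⟨⟨h1, h4 ▸ hℓ.2, h3⟩, h4⟩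
  · intro r hr
    simp only [Finset.mem_filter, Finset.mem_univ, true_and, nvec_succ_eq_iff _ _ _ hn] at hr ⊢
    exact hr.2.1

end

end MRS

open MRS in
/-- Smoothed pairwise regime probabilities. For `t ∈ {1,…,T}` and
`j ∈ S`: (a) if `i ∈ S_AR`, then
`P(r_{t-1} = i, r_t = j) = P(n_{t,i}(r) = 1, r_t = j) = ∑_{n ∈ S^(t), n_i = 1} γ^(t)_n(j)`;
(b) if `i ∈ S_AR^c`, then `P(r_{t-1} = i, r_t = j)` equals
`∑_{n : n-1 ∈ S^(t-1)} γ^(t)_n(j)·p_{ij}·α̂^(t-1)_{n-1}(i) / (∑_{ℓ ∈ S_AR^c} p_{ℓj}·α̂^(t-1)_{n-1}(ℓ))`. -/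
theorem smoothed_pairwise_probabilities (M k T : ℕ) (hM : 2 ≤ M) (hk : 1 ≤ k)
    (hkM : k < M) (hT : 1 ≤ T)
    (pi0 : Fin M → ℝ) (p : Fin M → Fin M → ℝ) (f0 : Fin M → ℝ)
    (f : ℕ → Fin M → (Fin k → ℕ) → ℝ)
    (hpi : ∀ i, 0 < pi0 i) (hpisum : ∑ i, pi0 i = 1)
    (hp : ∀ i j, 0 < p i j) (hprow : ∀ i, ∑ j, p i j = 1)
    (hf0 : ∀ i, 0 < f0 i) (hf : ∀ t, 1 ≤ t → t ≤ T → ∀ (j : Fin M) n, 0 < f t j n)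
    (t : ℕ) (ht1 : 1 ≤ t) (htT : t ≤ T) (j : Fin M) :
    (∀ i : Fin k,
      Ppath k pi0 p f0 f T
          (Finset.univ.filter fun r : Fin (T + 1) → Fin M =>
            pad r (t - 1) = Fin.castLE hkM.le i ∧ pad r t = j)
        = Ppath k pi0 p f0 f T
            (Finset.univ.filter fun r : Fin (T + 1) → Fin M =>
              nvec k (pad r) t i = 1 ∧ pad r t = j) ∧
      Ppath k pi0 p f0 f T
          (Finset.univ.filter fun r : Fin (T + 1) → Fin M =>
            pad r (t - 1) = Fin.castLE hkM.le i ∧ pad r t = j)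
        = ∑ n ∈ (Sset k t).filter (fun n => n i = 1), gamma k pi0 p f0 f T t n j) ∧
    (∀ i : Fin M, k ≤ (i : ℕ) →
      Ppath k pi0 p f0 f T
          (Finset.univ.filter fun r : Fin (T + 1) → Fin M =>
            pad r (t - 1) = i ∧ pad r t = j)
        = ∑ n' ∈ Sset k (t - 1),
            gamma k pi0 p f0 f T t (fun ℓ => n' ℓ + 1) j * p i j *
                alphaHat k pi0 p f0 f (t - 1) n' i /
              ∑ ℓ ∈ Finset.univ.filter (fun ℓ : Fin M => k ≤ (ℓ : ℕ)),
                p ℓ j * alphaHat k pi0 p f0 f (t - 1) n' ℓ) := by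
  obtain ⟨s, rfl⟩ : ∃ s, t = s + 1 := ⟨t - 1, by omega⟩
  simp only [Nat.add_sub_cancel]
  refine ⟨fun i => ?_, fun i hi => ?_⟩
  · simp only [← nvec_succ_eq_one_iff, true_and]
    unfold gamma Ppath
    rw [← Finset.sum_div]
    congr 1
    rw [← Finset.sum_fiberwise_of_maps_to (t := (Sset k (s + 1)).filter (fun n => n i = 1))
      (g := fun r => nvec k (pad r) (s + 1))]
    · apply Finset.sum_congr rfl
      intro n hn
      rw [Finset.mem_filter] at hn
      rw [Finset.filter_filter]
      apply Finset.sum_congr _ fun _ _ => rfl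
      ext r
      simp only [Finset.mem_filter, Finset.mem_univ, true_and]
      constructor
      · rintro ⟨⟨_, h1⟩, h2⟩
        exact ⟨h1, h2⟩
      · rintro ⟨h1, h2⟩
        exact ⟨⟨h2 ▸ hn.2, h1⟩, h2⟩
    · intro r hr
      simp only [Finset.mem_filter, Finset.mem_univ, true_and] at hr ⊢
      exact ⟨nvec_mem _ _, hr.1⟩
  · have hα : ∀ n ℓ, 0 ≤ alpha k pi0 p f0 f s n ℓ := fun n ℓ =>
      Finset.sum_nonneg fun r _ =>
        (wpath_pos pi0 p f0 f (by omega : s ≤ T) hpi hp hf0 hf r).le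
    unfold gamma Ppath
    rw [← Finset.sum_fiberwise_of_maps_to (t := Sset k s) (g := fun r => nvec k (pad r) s)
      (fun r _ => nvec_mem _ _), Finset.sum_div]
    apply Finset.sum_congr rfl
    intro n hn
    have hn1 : ∀ l, 1 ≤ n l := by
      intro l
      simp only [Sset, Finset.mem_filter, Fintype.mem_piFinset, Finset.mem_Icc] at hn
      exact (hn.1 l).1
    rw [Finset.filter_filter, pairsum pi0 p f0 f T s htT n i j hi,
      gamma_sum pi0 p f0 f T s htT n j hn1]
    unfold alphaHat
    simp only [← mul_div_assoc]
    rw [← Finset.sum_div]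
    rcases (hα n i).eq_or_lt with h0 | h0
    · simp [← h0]
    · have hA : 0 < Asum k pi0 p f0 f s := by
        refine lt_of_lt_of_le h0 ?_
        unfold Asum
        refine le_trans ?_ (Finset.single_le_sum
          (fun n _ => Finset.sum_nonneg fun ℓ _ => hα n ℓ) hn)
        exact Finset.single_le_sum (fun ℓ _ => hα n ℓ) (Finset.mem_univ i)
      have hD : 0 < ∑ ℓ ∈ Finset.univ.filter (fun ℓ : Fin M => k ≤ (ℓ : ℕ)),
          p ℓ j * alpha k pi0 p f0 f s n ℓ := by
        refine lt_of_lt_of_le (mul_pos (hp i j) h0) ?_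
        exact Finset.single_le_sum (f := fun ℓ => p ℓ j * alpha k pi0 p f0 f s n ℓ)
          (fun ℓ _ => mul_nonneg (hp ℓ j).le (hα n ℓ))
          (by simp [hi])
      field_simp
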